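/- On V = H²₀(Ω), Ω ⊂ ℝ² bounded, the quadratic map G(v) = Γ(v,v) with Γ(v,w,φ) = ∫_Ω Δv (curl w · ∇φ) dx defines a compact operator G : V → V*: it maps bounded sets of V to relatively compact sets of V*. -/

import Mathlib

open MeasureTheory

noncomputable section

/-- Partial derivative `∂f/∂xᵢ`. -/
def pd (f : EuclideanSpace ℝ (Fin 2) → ℝ) (i : Fin 2) (x : EuclideanSpace ℝ (Fin 2)) : ℝ :=
  fderiv ℝ f x (EuclideanSpace.single i 1)

/-- Second partial derivative `∂²f/∂xᵢ∂xⱼ`. -/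
def pd2 (f : EuclideanSpace ℝ (Fin 2) → ℝ) (i j : Fin 2) (x : EuclideanSpace ℝ (Fin 2)) : ℝ :=
  fderiv ℝ (fun y => pd f j y) x (EuclideanSpace.single i 1)

/-- Laplacian `Δf`. -/
def lap (f : EuclideanSpace ℝ (Fin 2) → ℝ) (x : EuclideanSpace ℝ (Fin 2)) : ℝ :=
  pd2 f 0 0 x + pd2 f 1 1 x

/-- `|D²f(x)|²` (squared Frobenius norm of the Hessian). -/
def hess2 (f : EuclideanSpace ℝ (Fin 2) → ℝ) (x : EuclideanSpace ℝ (Fin 2)) : ℝ :=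
  ∑ i, ∑ j, (pd2 f i j x) ^ 2

/-- Trilinear form `Γ(v,w,φ) = ∫_Ω Δv (curl w · ∇φ)` with
`curl w = (∂w/∂y, −∂w/∂x)`. -/
def Gam (Ω : Set (EuclideanSpace ℝ (Fin 2))) (v w φ : EuclideanSpace ℝ (Fin 2) → ℝ) : ℝ :=
  ∫ x in Ω, lap v x * (pd w 1 x * pd φ 0 x - pd w 0 x * pd φ 1 x)

/-- A smooth function compactly supported in `Ω`, a proxy for membership in `H²₀(Ω)`. -/
def IsTest (Ω : Set (EuclideanSpace ℝ (Fin 2))) (φ : EuclideanSpace ℝ (Fin 2) → ℝ) : Prop :=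
  ContDiff ℝ (⊤ : ℕ∞) φ ∧ HasCompactSupport φ ∧ tsupport φ ⊆ Ω

/-- Dual (`V*`) seminorm of a functional on `H²₀(Ω)`:
supremum over test functions of unit `H²` seminorm. -/
def dualNorm (Ω : Set (EuclideanSpace ℝ (Fin 2)))
    (l : (EuclideanSpace ℝ (Fin 2) → ℝ) → ℝ) : ℝ :=
  sSup {r : ℝ | ∃ φ, IsTest Ω φ ∧ Real.sqrt (∫ x in Ω, hess2 φ x) ≤ 1 ∧ r = |l φ|}


abbrev E2 := EuclideanSpace ℝ (Fin 2)

namespace IsTest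
variable {Ω : Set E2} {f g : E2 → ℝ}

lemma diff (hf : IsTest Ω f) : Differentiable ℝ f := hf.1.differentiable (by simp)
lemma cont (hf : IsTest Ω f) : Continuous f := hf.1.continuous
lemma integrable (hf : IsTest Ω f) : Integrable f := hf.cont.integrable_of_hasCompactSupport hf.2.1

lemma zero_out (hf : IsTest Ω f) {x : E2} (hx : x ∉ Ω) : f x = 0 :=
  image_eq_zero_of_notMem_tsupport (fun h => hx (hf.2.2 h))

lemma setInt (hf : IsTest Ω f) : ∫ x in Ω, f x = ∫ x, f x :=
  setIntegral_eq_integral_of_forall_compl_eq_zero (fun _ hx => hf.zero_out hx)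

lemma pd (hf : IsTest Ω f) (i : Fin 2) : IsTest Ω (pd f i) := by
  refine ⟨?_, ?_, ?_⟩
  · have h : ContDiff ℝ (⊤ : ℕ∞) (fderiv ℝ f) := hf.1.fderiv_right (by simp)
    exact h.clm_apply contDiff_const
  · exact hf.2.1.fderiv_apply (𝕜 := ℝ) _
  · exact (tsupport_fderiv_apply_subset ℝ _).trans hf.2.2

lemma pd2 (hf : IsTest Ω f) (i j : Fin 2) : IsTest Ω (pd2 f i j) := (hf.pd j).pd i

lemma mul (hf : IsTest Ω f) (hg : IsTest Ω g) : IsTest Ω (fun x => f x * g x) :=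
  ⟨hf.1.mul hg.1, hf.2.1.mul_right, (tsupport_mul_subset_left).trans hf.2.2⟩

lemma add (hf : IsTest Ω f) (hg : IsTest Ω g) : IsTest Ω (fun x => f x + g x) :=
  ⟨hf.1.add hg.1, hf.2.1.add hg.2.1, (tsupport_add f g).trans (Set.union_subset hf.2.2 hg.2.2)⟩

lemma cmul (c : ℝ) (hf : IsTest Ω f) : IsTest Ω (fun x => c * f x) :=
  ⟨contDiff_const.mul hf.1, hf.2.1.mul_left, (tsupport_mul_subset_right).trans hf.2.2⟩

lemma sub (hf : IsTest Ω f) (hg : IsTest Ω g) : IsTest Ω (fun x => f x - g x) := by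
  have := hf.add (hg.cmul (-1))
  simpa [sub_eq_add_neg] using this

lemma pow (hf : IsTest Ω f) (n : ℕ) : IsTest Ω (fun x => f x ^ (n+1)) := by
  induction n with
  | zero => simpa using hf
  | succ n ih => simpa [_root_.pow_succ] using ih.mul hf

end IsTest

lemma pd_mul {f g : E2 → ℝ} (hf : Differentiable ℝ f) (hg : Differentiable ℝ g) (i : Fin 2) (x : E2) :
    pd (fun x => f x * g x) i x = pd f i x * g x + f x * pd g i x := by
  unfold pd
  rw [fderiv_fun_mul (hf x) (hg x)]
  simp; ring

lemma pd_add {f g : E2 → ℝ} (hf : Differentiable ℝ f) (hg : Differentiable ℝ g) (i : Fin 2) (x : E2) :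
    pd (fun x => f x + g x) i x = pd f i x + pd g i x := by
  unfold pd
  rw [fderiv_fun_add (hf x) (hg x)]
  simp

lemma pd_sub {f g : E2 → ℝ} (hf : Differentiable ℝ f) (hg : Differentiable ℝ g) (i : Fin 2) (x : E2) :
    pd (fun x => f x - g x) i x = pd f i x - pd g i x := by
  unfold pd
  rw [fderiv_fun_sub (hf x) (hg x)]
  simp

lemma pd_cmul {f : E2 → ℝ} (c : ℝ) (hf : Differentiable ℝ f) (i : Fin 2) (x : E2) :
    pd (fun x => c * f x) i x = c * pd f i x := by
  unfold pd
  rw [fderiv_const_mul (hf x)]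
  simp

lemma pd2_sub {Ω} {f g : E2 → ℝ} (hf : IsTest Ω f) (hg : IsTest Ω g) (i j : Fin 2) (x : E2) :
    pd2 (fun x => f x - g x) i j x = pd2 f i j x - pd2 g i j x := by
  have : (fun y => pd (fun x => f x - g x) j y) = fun y => pd f j y - pd g j y := by
    funext y; exact pd_sub hf.diff hg.diff j y
  change pd (fun y => pd (fun x => f x - g x) j y) i x = _
  rw [this, pd_sub (hf.pd j).diff (hg.pd j).diff]; rfl

lemma pd2_add {Ω} {f g : E2 → ℝ} (hf : IsTest Ω f) (hg : IsTest Ω g) (i j : Fin 2) (x : E2) :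
    pd2 (fun x => f x + g x) i j x = pd2 f i j x + pd2 g i j x := by
  have : (fun y => pd (fun x => f x + g x) j y) = fun y => pd f j y + pd g j y := by
    funext y; exact pd_add hf.diff hg.diff j y
  change pd (fun y => pd (fun x => f x + g x) j y) i x = _
  rw [this, pd_add (hf.pd j).diff (hg.pd j).diff]; rfl

lemma pd2_comm {Ω} {f : E2 → ℝ} (hf : IsTest Ω f) (i j : Fin 2) (x : E2) :
    pd2 f i j x = pd2 f j i x := by
  have hd : Differentiable ℝ (fderiv ℝ f) :=
    (hf.1.fderiv_right (m := (⊤ : ℕ∞)) (by simp)).differentiable (by simp)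
  have key : ∀ i j, pd2 f i j x
      = fderiv ℝ (fderiv ℝ f) x (EuclideanSpace.single i 1) (EuclideanSpace.single j 1) := by
    intro i j
    unfold pd2 pd
    rw [fderiv_clm_apply (hd x) (by fun_prop)]
    simp
  rw [key, key]
  have hs : IsSymmSndFDerivAt ℝ f x := hf.1.contDiffAt.isSymmSndFDerivAt (by
    simp only [minSmoothness_of_isRCLikeNormedField]
    exact WithTop.coe_le_coe.2 (le_top : (2 : ℕ∞) ≤ ⊤))
  exact hs _ _

lemma int_pd_zero {Ω} {f : E2 → ℝ} (hf : IsTest Ω f) (i : Fin 2) : ∫ x, pd f i x = 0 := by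
  have h := integral_mul_fderiv_eq_neg_fderiv_mul_of_integrable (μ := (volume : Measure E2))
    (f := fun _ : E2 => (1 : ℝ)) (g := f) (v := EuclideanSpace.single i 1) (by simp)
    (by simp only [one_mul]; exact (hf.pd i).integrable) (by simpa using hf.integrable)
    (fun x _ => by fun_prop) (fun x _ => hf.diff x)
  simpa [pd] using h

lemma cs_int {α : Type*} [MeasurableSpace α] {μ : Measure α} {f g : α → ℝ}
    (hff : Integrable (fun x => f x * f x) μ) (hgg : Integrable (fun x => g x * g x) μ)
    (hfg : Integrable (fun x => f x * g x) μ) :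
    (∫ x, f x * g x ∂μ) ^ 2 ≤ (∫ x, f x * f x ∂μ) * ∫ x, g x * g x ∂μ := by
  have h : ∀ t : ℝ, 0 ≤ (∫ x, f x * f x ∂μ) * (t * t) + (2 * ∫ x, f x * g x ∂μ) * t
      + ∫ x, g x * g x ∂μ := by
    intro t
    have e : (∫ x, f x * f x ∂μ) * (t * t) + (2 * ∫ x, f x * g x ∂μ) * t
      + ∫ x, g x * g x ∂μ = ∫ x, (t * f x + g x) ^ 2 ∂μ := by
      have : ∀ x, (t * f x + g x) ^ 2 = (t * t) * (f x * f x) + (2 * t) * (f x * g x) + g x * g x := by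
        intro x; ring
      simp_rw [this]
      have i1 : Integrable (fun x => (t * t) * (f x * f x) + (2 * t) * (f x * g x)) μ :=
        (hff.const_mul _).add (hfg.const_mul _)
      rw [integral_add i1 hgg, integral_add (hff.const_mul _) (hfg.const_mul _), integral_const_mul, integral_const_mul]
      ring
    rw [e]
    exact integral_nonneg (fun x => sq_nonneg _)
  have := discrim_le_zero h
  unfold discrim at this
  nlinarith

lemma L4 {Ω} {z : E2 → ℝ} (hz : IsTest Ω z) (i : Fin 2) {A H : ℝ} (hA : ∀ x, |z x| ≤ A)
    (hH : ∫ x, (pd2 z i i x) ^ 2 ≤ H) : ∫ x, (pd z i x) ^ 4 ≤ 9 * A ^ 2 * H := by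
  have h1 := hz.pd i
  have h2 := hz.pd2 i i
  have e0 : ∫ x, pd (fun y => z y * (pd z i y * (pd z i y * pd z i y))) i x = 0 :=
    int_pd_zero (hz.mul (h1.mul (h1.mul h1))) i
  have e1 : ∀ x, pd (fun y => z y * (pd z i y * (pd z i y * pd z i y))) i x
      = (pd z i x) ^ 4 + 3 * ((z x * pd2 z i i x) * (pd z i x ^ 2)) := by
    intro x
    rw [pd_mul hz.diff (h1.mul (h1.mul h1)).diff, pd_mul h1.diff (h1.mul h1).diff,
      pd_mul h1.diff h1.diff]
    change _ * _ + _ * (pd2 z i i x * _ + _ * (pd2 z i i x * _ + _ * pd2 z i i x)) = _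
    ring
  simp_rw [e1] at e0
  have t2 := hz.mul h2
  have t3 := h1.pow 1
  rw [integral_add (h1.pow 3).integrable ((t2.mul t3).cmul 3).integrable, integral_const_mul] at e0
  have c := cs_int (t2.mul t2).integrable (t3.mul t3).integrable (t2.mul t3).integrable
  have c2 : ∫ x, (z x * pd2 z i i x) * (z x * pd2 z i i x) ≤ A ^ 2 * H := by
    calc _ ≤ ∫ x, A ^ 2 * (pd2 z i i x) ^ 2 := by
          apply integral_mono (t2.mul t2).integrable ((h2.pow 1).cmul _).integrable
          intro x
          have : z x ^ 2 ≤ A ^ 2 := sq_le_sq' (by linarith [abs_le.1 (hA x)]) (abs_le.1 (hA x)).2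
          have := mul_le_mul_of_nonneg_right this (sq_nonneg (pd2 z i i x))
          norm_num
          nlinarith
      _ ≤ _ := by rw [integral_const_mul]; gcongr
  have c3 : ∫ x, pd z i x ^ 2 * pd z i x ^ 2 = ∫ x, (pd z i x) ^ 4 := by
    congr 1; funext x; ring
  norm_num at c
  rw [c3] at c
  have c0 : 0 ≤ ∫ x, (pd z i x) ^ 4 := integral_nonneg (fun x => by positivity)
  set I := ∫ x, (pd z i x) ^ 4
  set J := ∫ x, (z x * pd2 z i i x) * (pd z i x ^ 2)
  by_contra hcon
  push Not at hcon
  have hI : 0 ≤ A^2 * H := le_trans (integral_nonneg (fun x => mul_self_nonneg _)) c2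
  have : J ^ 2 ≤ A ^ 2 * H * I := c.trans (by gcongr)
  have : I = -3 * J := by linarith
  nlinarith

/-- Integration by parts identity for `Γ(v,v,φ)`. -/
lemma Gam_eq {Ω} {v φ : E2 → ℝ} (hv : IsTest Ω v) (hφ : IsTest Ω φ) :
    Gam Ω v v φ = ∫ x, ((pd v 0 x * pd v 0 x - pd v 1 x * pd v 1 x) * pd2 φ 0 1 x
      - pd v 0 x * pd v 1 x * (pd2 φ 0 0 x - pd2 φ 1 1 x)) := by
  have ha := hv.pd 0
  have hb := hv.pd 1
  have hp := hφ.pd 0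
  have hq := hφ.pd 1
  have hL : IsTest Ω (lap v) := (hv.pd2 0 0).add (hv.pd2 1 1)
  have h1 : IsTest Ω (fun x => lap v x * (pd v 1 x * pd φ 0 x - pd v 0 x * pd φ 1 x)) :=
    hL.mul ((hb.mul hp).sub (ha.mul hq))
  have h2 : IsTest Ω (fun x => ((pd v 0 x * pd v 0 x - pd v 1 x * pd v 1 x) * pd2 φ 0 1 x
      - pd v 0 x * pd v 1 x * (pd2 φ 0 0 x - pd2 φ 1 1 x))) :=
    (((ha.mul ha).sub (hb.mul hb)).mul (hφ.pd2 0 1)).sub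
      ((ha.mul hb).mul ((hφ.pd2 0 0).sub (hφ.pd2 1 1)))
  unfold Gam
  rw [h1.setInt, ← sub_eq_zero, ← integral_sub h1.integrable h2.integrable]
  have hbb := (hb.mul hb).sub (ha.mul ha)
  have hX := ((ha.mul hb).mul hp).add ((hbb.mul hq).cmul (1/2))
  have hY := ((hbb.mul hp).cmul (1/2)).sub ((ha.mul hb).mul hq)
  have zX := int_pd_zero hX 0
  have zY := int_pd_zero hY 1
  have key := integral_add (hX.pd 0).integrable (hY.pd 1).integrable
  rw [zX, zY, add_zero] at key
  rw [← key]
  congr 1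
  funext x
  rw [pd_add ((ha.mul hb).mul hp).diff ((hbb.mul hq).cmul (1/2)).diff,
    pd_sub ((hbb.mul hp).cmul (1/2)).diff ((ha.mul hb).mul hq).diff,
    pd_mul (ha.mul hb).diff hp.diff, pd_mul (ha.mul hb).diff hq.diff,
    pd_mul ha.diff hb.diff, pd_mul ha.diff hb.diff,
    pd_cmul _ (hbb.mul hq).diff, pd_cmul _ (hbb.mul hp).diff,
    pd_mul hbb.diff hq.diff, pd_mul hbb.diff hp.diff,
    pd_sub (hb.mul hb).diff (ha.mul ha).diff, pd_sub (hb.mul hb).diff (ha.mul ha).diff,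
    pd_mul ha.diff ha.diff, pd_mul ha.diff ha.diff, pd_mul hb.diff hb.diff, pd_mul hb.diff hb.diff]
  have r : ∀ (f : E2 → ℝ) (i j : Fin 2), pd (pd f j) i x = pd2 f i j x := fun _ _ _ => rfl
  simp only [r, lap]
  rw [pd2_comm hv 1 0, pd2_comm hφ 1 0]
  ring

lemma tri {Ω} {f g h : E2 → ℝ} (hf : IsTest Ω f) (hg : IsTest Ω g) (hh : IsTest Ω h) {P Q : ℝ}
    (hP : ∫ x, f x ^ 4 ≤ P ^ 4) (hQ : ∫ x, g x ^ 4 ≤ Q ^ 4) (hP0 : 0 ≤ P) (hQ0 : 0 ≤ Q)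
    (h1 : ∫ x, h x ^ 2 ≤ 1) : |∫ x, f x * g x * h x| ≤ P * Q := by
  have hfg := hf.mul hg
  have c1 := cs_int (hfg.mul hfg).integrable (hh.mul hh).integrable (hfg.mul hh).integrable
  have hf2 := hf.mul hf
  have hg2 := hg.mul hg
  have c2 := cs_int (hf2.mul hf2).integrable (hg2.mul hg2).integrable (hf2.mul hg2).integrable
  have e1 : ∫ x, f x * g x * (f x * g x) = ∫ x, f x * f x * (g x * g x) := by
    congr 1; funext x; ring
  have e2 : ∫ x, f x * f x * (f x * f x) = ∫ x, f x ^ 4 := by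
    congr 1; funext x; ring
  have e3 : ∫ x, g x * g x * (g x * g x) = ∫ x, g x ^ 4 := by
    congr 1; funext x; ring
  have e4 : ∫ x, h x * h x = ∫ x, h x ^ 2 := by
    congr 1; funext x; ring
  rw [e1, e4] at c1
  rw [e2, e3] at c2
  have n1 : 0 ≤ ∫ x, g x ^ 4 := integral_nonneg (fun x => by positivity)
  have n2 : 0 ≤ ∫ x, f x * f x * (g x * g x) :=
    integral_nonneg (fun x => mul_nonneg (mul_self_nonneg _) (mul_self_nonneg _))
  have d2 : (∫ x, f x * f x * (g x * g x)) ^ 2 ≤ ((P * Q) ^ 2) ^ 2 := by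
    calc _ ≤ _ := c2
      _ ≤ P ^ 4 * Q ^ 4 := by gcongr
      _ = _ := by ring
  have d3 := abs_le_of_sq_le_sq d2 (by positivity)
  rw [abs_of_nonneg n2] at d3
  have d4 : (∫ x, f x * g x * h x) ^ 2 ≤ (P * Q) ^ 2 := by
    calc _ ≤ _ := c1
      _ ≤ (∫ x, f x * f x * (g x * g x)) * 1 := by gcongr
      _ ≤ _ := by linarith
  exact abs_le_of_sq_le_sq d4 (by positivity)

lemma int_pd2_le {Ω} {f : E2 → ℝ} (hf : IsTest Ω f) {C : ℝ}
    (h : Real.sqrt (∫ x in Ω, hess2 f x) ≤ C) (i j : Fin 2) : ∫ x, pd2 f i j x ^ 2 ≤ C ^ 2 := by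
  have hs : IsTest Ω (hess2 f) := by
    have := (((hf.pd2 0 0).pow 1).add ((hf.pd2 0 1).pow 1)).add
      (((hf.pd2 1 0).pow 1).add ((hf.pd2 1 1).pow 1))
    convert this using 2
    simp [hess2, Fin.sum_univ_two]
  have C0 : 0 ≤ C := (Real.sqrt_nonneg _).trans h
  rw [Real.sqrt_le_left C0, hs.setInt] at h
  refine le_trans (integral_mono ((hf.pd2 i j).pow 1).integrable hs.integrable ?_) h
  intro x
  simp only [hess2]
  refine le_trans ?_ (Finset.single_le_sum (f := fun i => ∑ j, pd2 f i j x ^ 2) (fun i _ => Finset.sum_nonneg (fun j _ => sq_nonneg _)) (Finset.mem_univ i))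
  exact Finset.single_le_sum (f := fun j => pd2 f i j x ^ 2) (fun j _ => sq_nonneg _) (Finset.mem_univ j)

lemma gam_diff {Ω} {v w φ : E2 → ℝ} (hv : IsTest Ω v) (hw : IsTest Ω w) (hφ : IsTest Ω φ)
    {C A S : ℝ} (hA : 0 ≤ A) (hS : 0 ≤ S)
    (h1 : Real.sqrt (∫ x in Ω, hess2 v x) ≤ C) (h2 : Real.sqrt (∫ x in Ω, hess2 w x) ≤ C)
    (h3 : Real.sqrt (∫ x in Ω, hess2 φ x) ≤ 1)
    (hz : ∀ x, |v x - w x| ≤ A) (hs : ∀ x, |v x + w x| ≤ S) :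
    |Gam Ω v v φ - Gam Ω w w φ| ≤ 24 * C * (Real.sqrt A * Real.sqrt S) := by
  have C0 : 0 ≤ C := (Real.sqrt_nonneg _).trans h1
  have Hz := hv.sub hw
  have Hs := hv.add hw
  have b1 : ∀ i, ∫ x, pd2 (fun x => v x - w x) i i x ^ 2 ≤ 4 * C ^ 2 := by
    intro i
    have := integral_mono ((Hz.pd2 i i).pow 1).integrable
      ((((hv.pd2 i i).pow 1).cmul 2).add (((hw.pd2 i i).pow 1).cmul 2)).integrable
      (fun x => by
        simp only [pd2_sub hv hw]
        norm_num
        nlinarith [sq_nonneg (pd2 v i i x + pd2 w i i x)])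
    rw [integral_add ((((hv.pd2 i i).pow 1).cmul 2)).integrable (((hw.pd2 i i).pow 1).cmul 2).integrable,
      integral_const_mul, integral_const_mul] at this
    norm_num at this
    linarith [int_pd2_le hv h1 i i, int_pd2_le hw h2 i i]
  have b2 : ∀ i, ∫ x, pd2 (fun x => v x + w x) i i x ^ 2 ≤ 4 * C ^ 2 := by
    intro i
    have := integral_mono ((Hs.pd2 i i).pow 1).integrable
      ((((hv.pd2 i i).pow 1).cmul 2).add (((hw.pd2 i i).pow 1).cmul 2)).integrable
      (fun x => by
        simp only [pd2_add hv hw]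
        norm_num
        nlinarith [sq_nonneg (pd2 v i i x - pd2 w i i x)])
    rw [integral_add ((((hv.pd2 i i).pow 1).cmul 2)).integrable (((hw.pd2 i i).pow 1).cmul 2).integrable,
      integral_const_mul, integral_const_mul] at this
    norm_num at this
    linarith [int_pd2_le hv h1 i i, int_pd2_le hw h2 i i]
  have pw : ∀ B : ℝ, 0 ≤ B → 9 * B ^ 2 * (4 * C ^ 2) = (Real.sqrt (6 * C) * Real.sqrt B) ^ 4 := by
    intro B hB
    have e1 := Real.sq_sqrt hB
    have e2 := Real.sq_sqrt (show 0 ≤ 6 * C by positivity)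
    calc _ = (6 * C) ^ 2 * B ^ 2 := by ring
      _ = (Real.sqrt (6 * C) ^ 2) ^ 2 * (Real.sqrt B ^ 2) ^ 2 := by rw [e1, e2]
      _ = _ := by ring
  have l1 := fun i => (L4 Hz i hz (b1 i)).trans_eq (pw A hA)
  have l2 := fun i => (L4 Hs i hs (b2 i)).trans_eq (pw S hS)
  have T := fun i j k l => tri (Hz.pd i) (Hs.pd j) (hφ.pd2 k l) (l1 i) (l2 j) (by positivity) (by positivity)
    (by simpa using int_pd2_le hφ h3 k l)
  have I := fun i j k l => (((Hz.pd i).mul (Hs.pd j)).mul (hφ.pd2 k l))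
  have e : Real.sqrt (6 * C) * Real.sqrt A * (Real.sqrt (6 * C) * Real.sqrt S)
      = 6 * C * (Real.sqrt A * Real.sqrt S) := by
    have e2 := Real.sq_sqrt (show 0 ≤ 6 * C by positivity)
    calc _ = (Real.sqrt (6 * C) ^ 2) * (Real.sqrt A * Real.sqrt S) := by ring
      _ = _ := by rw [e2]
  simp only [e] at T
  set z := fun x => v x - w x
  set s := fun x => v x + w x
  have dec : Gam Ω v v φ - Gam Ω w w φ =
      (∫ x, pd z 0 x * pd s 0 x * pd2 φ 0 1 x) - (∫ x, pd z 1 x * pd s 1 x * pd2 φ 0 1 x)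
      - (1/2) * ((∫ x, pd z 0 x * pd s 1 x * pd2 φ 0 0 x) + (∫ x, pd z 1 x * pd s 0 x * pd2 φ 0 0 x))
      + (1/2) * ((∫ x, pd z 0 x * pd s 1 x * pd2 φ 1 1 x) + (∫ x, pd z 1 x * pd s 0 x * pd2 φ 1 1 x)) := by
    rw [Gam_eq hv hφ, Gam_eq hw hφ]
    rw [← integral_sub, ← integral_sub (I 0 0 0 1).integrable (I 1 1 0 1).integrable,
      ← integral_add (I 0 1 0 0).integrable (I 1 0 0 0).integrable,
      ← integral_add (I 0 1 1 1).integrable (I 1 0 1 1).integrable,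
      ← integral_const_mul, ← integral_const_mul,
      ← integral_sub ((I 0 0 0 1).sub (I 1 1 0 1)).integrable (((I 0 1 0 0).add (I 1 0 0 0)).cmul (1/2)).integrable,
      ← integral_add (((I 0 0 0 1).sub (I 1 1 0 1)).sub (((I 0 1 0 0).add (I 1 0 0 0)).cmul (1/2))).integrable (((I 0 1 1 1).add (I 1 0 1 1)).cmul (1/2)).integrable]
    · congr 1
      funext x
      simp only [z, s, pd_sub hv.diff hw.diff, pd_add hv.diff hw.diff]
      ring
    · have ha := hv.pd 0
      have hb := hv.pd 1
      exact ((((ha.mul ha).sub (hb.mul hb)).mul (hφ.pd2 0 1)).sub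
        ((ha.mul hb).mul ((hφ.pd2 0 0).sub (hφ.pd2 1 1)))).integrable
    · have ha := hw.pd 0
      have hb := hw.pd 1
      exact ((((ha.mul ha).sub (hb.mul hb)).mul (hφ.pd2 0 1)).sub
        ((ha.mul hb).mul ((hφ.pd2 0 0).sub (hφ.pd2 1 1)))).integrable
  rw [dec]
  have t1 := abs_le.1 (T 0 0 0 1)
  have t2 := abs_le.1 (T 1 1 0 1)
  have t3 := abs_le.1 (T 0 1 0 0)
  have t4 := abs_le.1 (T 1 0 0 0)
  have t5 := abs_le.1 (T 0 1 1 1)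
  have t6 := abs_le.1 (T 1 0 1 1)
  rw [abs_le]
  constructor <;> linarith [t1.1, t1.2, t2.1, t2.2, t3.1, t3.2, t4.1, t4.2, t5.1, t5.2, t6.1, t6.2]

/-- Elementary Morrey-type estimate on a strip. -/
lemma strip {F F1 F12 : ℝ → ℝ → ℝ} {R H : ℝ} (hR : 0 < R) (hH : 0 ≤ H)
    (d1 : ∀ s t, HasDerivAt (fun s => F s t) (F1 s t) s)
    (d2 : ∀ s t, HasDerivAt (fun t => F1 s t) (F12 s t) t)
    (c1 : Continuous (fun p : ℝ × ℝ => F1 p.1 p.2))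
    (c2 : Continuous (fun p : ℝ × ℝ => F12 p.1 p.2))
    (z1 : ∀ s t, R ≤ |t| → F1 s t = 0)
    (i2 : Integrable (fun p : ℝ × ℝ => F12 p.1 p.2 ^ 2))
    (hI : ∫ p : ℝ × ℝ, F12 p.1 p.2 ^ 2 ≤ H ^ 2) (a a' b : ℝ) :
    |F a' b - F a b| ≤ Real.sqrt (2 * R * |a' - a|) * H := by
  set S : Set (ℝ × ℝ) := Set.uIoc a a' ×ˢ Set.Icc (-R) R
  have hSm : MeasurableSet S := measurableSet_uIoc.prod measurableSet_Icc
  have hSsub : S ⊆ Set.uIcc a a' ×ˢ Set.Icc (-R) R :=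
    Set.prod_mono Set.uIoc_subset_uIcc le_rfl
  have hK : IsCompact (Set.uIcc a a' ×ˢ Set.Icc (-R) R) := isCompact_uIcc.prod isCompact_Icc
  have iS : ∀ f : ℝ × ℝ → ℝ, Continuous f → IntegrableOn f S := fun f hf =>
    (hf.continuousOn.integrableOn_compact hK).mono_set hSsub
  have bd : ∀ s, |F1 s b| ≤ ∫ t in Set.Icc (-R) R, |F12 s t| := by
    intro s
    have cs : Continuous (fun t => F12 s t) := c2.comp (by fun_prop : Continuous fun t : ℝ => (s, t))
    by_cases hb : R ≤ |b|
    · rw [z1 s b hb]; simp only [abs_zero]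
      exact integral_nonneg (fun _ => abs_nonneg _)
    · push Not at hb
      have hb' := abs_lt.1 hb
      have f := intervalIntegral.integral_eq_sub_of_hasDerivAt (a := -R) (b := b)
        (fun t _ => d2 s t) (cs.intervalIntegrable _ _)
      rw [z1 s (-R) (by rw [abs_neg]; exact le_abs_self R), sub_zero] at f
      rw [← f]
      have f2 := intervalIntegral.norm_integral_le_integral_norm (μ := volume) (f := fun t => F12 s t) hb'.1.le
      refine f2.trans ?_
      rw [intervalIntegral.integral_of_le hb'.1.le]
      apply setIntegral_mono_set
      · exact (cs.abs.continuousOn.integrableOn_compact isCompact_Icc)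
      · exact Filter.Eventually.of_forall (fun _ => abs_nonneg _)
      · exact (show Set.Ioc (-R) b ⊆ Set.Icc (-R) R from
          fun t ht => ⟨ht.1.le, ht.2.trans hb'.2.le⟩).eventuallyLE
  have iW : IntegrableOn (fun p : ℝ × ℝ => |F12 p.1 p.2|) S := iS _ c2.abs
  have step1 : |F a' b - F a b| ≤ ∫ p in S, |F12 p.1 p.2| := by
    have cs : Continuous (fun s => F1 s b) := c1.comp (by fun_prop : Continuous fun s : ℝ => (s, b))
    have f := intervalIntegral.integral_eq_sub_of_hasDerivAt (a := a) (b := a')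
        (fun s _ => d1 s b) (cs.intervalIntegrable _ _)
    rw [← f]
    refine (intervalIntegral.norm_integral_le_integral_norm_uIoc (μ := volume) (f := fun s => F1 s b)).trans ?_
    have := setIntegral_prod (μ := (volume : Measure ℝ)) (ν := (volume : Measure ℝ)) (fun p : ℝ × ℝ => |F12 p.1 p.2|) iW
    rw [Measure.volume_eq_prod]
    rw [this]
    apply integral_mono
    · exact (cs.norm.continuousOn.integrableOn_compact isCompact_uIcc).mono_set Set.uIoc_subset_uIcc
    · have iW' := iW
      rw [IntegrableOn, Measure.volume_eq_prod, ← Measure.prod_restrict] at iW'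
      exact iW'.integral_prod_left
    · intro s; exact bd s
  have cs := cs_int (μ := volume.restrict S) (f := fun p : ℝ × ℝ => |F12 p.1 p.2|) (g := fun _ => 1)
    (iS _ (by fun_prop)) (iS _ (by fun_prop)) (iS _ (by fun_prop))
  have vS : ∫ p in S, (1:ℝ) * 1 = 2 * R * |a' - a| := by
    simp only [mul_one, integral_const, smul_eq_mul, MeasurableSet.univ, measureReal_restrict_apply, Set.univ_inter]
    rw [Measure.volume_eq_prod, measureReal_prod_prod]
    simp [Set.uIoc, Measure.real, Real.volume_Ioc, Real.volume_Icc]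
    rw [ENNReal.toReal_ofReal (by linarith), max_sub_min_eq_abs]
    ring
  rw [vS] at cs
  simp only [mul_one, abs_mul_abs_self] at cs
  have cs2 : ∫ p in S, F12 p.1 p.2 * F12 p.1 p.2 ≤ H ^ 2 := by
    refine le_trans ?_ hI
    simp only [← pow_two]
    exact setIntegral_le_integral i2 (Filter.Eventually.of_forall fun _ => sq_nonneg _)
  refine step1.trans (abs_le_of_sq_le_sq' ?_ (by positivity)).2
  rw [mul_pow, Real.sq_sqrt (by positivity)]
  refine cs.trans ?_
  rw [mul_comm]
  gcongr

def mk2 (s t : ℝ) : E2 := !₂[s, t]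

lemma mk2_eq (s t : ℝ) : mk2 s t = s • EuclideanSpace.single 0 1 + t • EuclideanSpace.single 1 1 := by
  ext i; fin_cases i <;> simp [mk2]

lemma mk2_mp : MeasurePreserving (fun p : ℝ × ℝ => mk2 p.1 p.2) := by
  have h1 := (volume_preserving_finTwoArrow ℝ).symm
  have h2 := PiLp.volume_preserving_toLp (Fin 2)
  have := h2.comp h1
  exact this

lemma mk2_cont : Continuous (fun p : ℝ × ℝ => mk2 p.1 p.2) := by
  simp only [mk2_eq]; fun_prop

lemma mk2_emb : MeasurableEmbedding (fun p : ℝ × ℝ => mk2 p.1 p.2) := by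
  have := (MeasurableEquiv.toLp 2 (Fin 2 → ℝ)).measurableEmbedding.comp
    (MeasurableEquiv.finTwoArrow (α := ℝ)).symm.measurableEmbedding
  exact this

lemma der0 {f : E2 → ℝ} (hf : Differentiable ℝ f) (s t : ℝ) :
    HasDerivAt (fun s => f (mk2 s t)) (pd f 0 (mk2 s t)) s := by
  have h : HasDerivAt (fun s => mk2 s t) (EuclideanSpace.single 0 1) s := by
    simp only [mk2_eq]
    simpa using ((hasDerivAt_id s).smul_const (EuclideanSpace.single (0 : Fin 2) (1:ℝ))).add_const
      (t • EuclideanSpace.single (1 : Fin 2) (1:ℝ))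
  exact (hf _).hasFDerivAt.comp_hasDerivAt s h

lemma der1 {f : E2 → ℝ} (hf : Differentiable ℝ f) (s t : ℝ) :
    HasDerivAt (fun t => f (mk2 s t)) (pd f 1 (mk2 s t)) t := by
  have h : HasDerivAt (fun t => mk2 s t) (EuclideanSpace.single 1 1) t := by
    simp only [mk2_eq]
    simpa using ((hasDerivAt_id t).smul_const (EuclideanSpace.single (1 : Fin 2) (1:ℝ))).const_add
      (s • EuclideanSpace.single (0 : Fin 2) (1:ℝ))
  exact (hf _).hasFDerivAt.comp_hasDerivAt t h

lemma coord_le (x : E2) (i : Fin 2) : |x i| ≤ ‖x‖ := by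
  simpa using PiLp.norm_apply_le x i

lemma holder0 {Ω} {v : E2 → ℝ} (hv : IsTest Ω v) {R C : ℝ} (hR : 0 < R)
    (hΩ : ∀ x ∈ Ω, ‖x‖ < R)
    (hC : Real.sqrt (∫ x in Ω, hess2 v x) ≤ C) (a a' b : ℝ) :
    |v (mk2 a' b) - v (mk2 a b)| ≤ Real.sqrt (2 * R * |a' - a|) * C := by
  have h2 := (hv.pd2 1 0).pow 1
  refine strip (F := fun s t => v (mk2 s t)) (F1 := fun s t => pd v 0 (mk2 s t))
    (F12 := fun s t => pd2 v 1 0 (mk2 s t)) hR ((Real.sqrt_nonneg _).trans hC)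
    (der0 hv.diff) (der1 (hv.pd 0).diff) ((hv.pd 0).cont.comp mk2_cont)
    ((hv.pd2 1 0).cont.comp mk2_cont) ?_ ?_ ?_ a a' b
  · intro s t ht
    refine (hv.pd 0).zero_out (fun h => ?_)
    have := coord_le (mk2 s t) 1
    simp [mk2] at this
    exact absurd (hΩ _ h) (not_lt.2 (ht.trans this))
  · exact (mk2_mp.integrable_comp_emb mk2_emb).2 h2.integrable
  · exact (mk2_mp.integral_comp mk2_emb (fun x => pd2 v 1 0 x ^ 2)).trans_le (int_pd2_le hv hC 1 0)

lemma holder1 {Ω} {v : E2 → ℝ} (hv : IsTest Ω v) {R C : ℝ} (hR : 0 < R)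
    (hΩ : ∀ x ∈ Ω, ‖x‖ < R)
    (hC : Real.sqrt (∫ x in Ω, hess2 v x) ≤ C) (a a' b : ℝ) :
    |v (mk2 b a') - v (mk2 b a)| ≤ Real.sqrt (2 * R * |a' - a|) * C := by
  have h2 := (hv.pd2 0 1).pow 1
  have sw : MeasurePreserving (Prod.swap : ℝ × ℝ → ℝ × ℝ) := Measure.measurePreserving_swap
  have mp := mk2_mp.comp sw
  have emb := mk2_emb.comp (MeasurableEquiv.prodComm (α := ℝ) (β := ℝ)).measurableEmbedding
  have ct := mk2_cont.comp continuous_swap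
  refine strip (F := fun s t => v (mk2 t s)) (F1 := fun s t => pd v 1 (mk2 t s))
    (F12 := fun s t => pd2 v 0 1 (mk2 t s)) hR ((Real.sqrt_nonneg _).trans hC)
    (fun s t => der1 hv.diff t s) (fun s t => der0 (hv.pd 1).diff t s) ((hv.pd 1).cont.comp ct)
    ((hv.pd2 0 1).cont.comp ct) ?_ ?_ ?_ a a' b
  · intro s t ht
    refine (hv.pd 1).zero_out (fun h => ?_)
    have := coord_le (mk2 t s) 0
    simp [mk2] at this
    exact absurd (hΩ _ h) (not_lt.2 (ht.trans this))
  · exact (mp.integrable_comp_emb emb).2 h2.integrable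
  · exact (mp.integral_comp emb (fun x => pd2 v 0 1 x ^ 2)).trans_le (int_pd2_le hv hC 0 1)

lemma mk2_coord (x : E2) : mk2 (x 0) (x 1) = x := by
  ext i; fin_cases i <;> simp [mk2]

lemma holder {Ω} {v : E2 → ℝ} (hv : IsTest Ω v) {R C : ℝ} (hR : 0 < R)
    (hΩ : ∀ x ∈ Ω, ‖x‖ < R)
    (hC : Real.sqrt (∫ x in Ω, hess2 v x) ≤ C) (x y : E2) :
    |v x - v y| ≤ 2 * (Real.sqrt (2 * R * dist x y) * C) := by
  have C0 : 0 ≤ C := (Real.sqrt_nonneg _).trans hC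
  have h0 := holder0 hv hR hΩ hC (y 0) (x 0) (x 1)
  have h1 := holder1 hv hR hΩ hC (y 1) (x 1) (y 0)
  rw [mk2_coord] at h0 h1
  have k0 : |x 0 - y 0| ≤ dist x y := by
    rw [dist_eq_norm]; simpa using coord_le (x - y) 0
  have k1 : |x 1 - y 1| ≤ dist x y := by
    rw [dist_eq_norm]; simpa using coord_le (x - y) 1
  have m0 : Real.sqrt (2 * R * |x 0 - y 0|) * C ≤ Real.sqrt (2 * R * dist x y) * C := by gcongr
  have m1 : Real.sqrt (2 * R * |x 1 - y 1|) * C ≤ Real.sqrt (2 * R * dist x y) * C := by gcongr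
  calc |v x - v y| ≤ |v x - v (mk2 (y 0) (x 1))| + |v (mk2 (y 0) (x 1)) - v y| := abs_sub_le _ _ _
    _ ≤ _ := by linarith

lemma sup_bd {Ω} {v : E2 → ℝ} (hv : IsTest Ω v) {R C : ℝ} (hR : 0 < R)
    (hΩ : ∀ x ∈ Ω, ‖x‖ < R)
    (hC : Real.sqrt (∫ x in Ω, hess2 v x) ≤ C) (x : E2) :
    |v x| ≤ 2 * (Real.sqrt (2 * R * (2 * R)) * C) := by
  have C0 : 0 ≤ C := (Real.sqrt_nonneg _).trans hC
  by_cases hx : x ∈ Ω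
  · set y : E2 := R • EuclideanSpace.single 0 1
    have hy : ‖y‖ = R := by simp [y, norm_smul, abs_of_pos hR]
    have h := holder hv hR hΩ hC x y
    rw [hv.zero_out (x := y) (fun h => absurd (hΩ _ h) (by rw [hy]; exact lt_irrefl _)), sub_zero] at h
    refine h.trans ?_
    have : dist x y ≤ 2 * R := by
      rw [dist_eq_norm]; linarith [norm_sub_le x y, hΩ x hx]
    gcongr
  · rw [hv.zero_out hx]; simp; positivity

/-- Compactness of the quadratic map `G(v) = Γ(v,v) : V → V*`: every `H²`-bounded sequence
admits a subsequence whose image under `G` is Cauchy in the dual norm, i.e. `G` maps bounded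
sets to relatively compact subsets of `V*`. -/
theorem G_compact (Ω : Set (EuclideanSpace ℝ (Fin 2))) (hΩ : IsOpen Ω)
    (hbdd : Bornology.IsBounded Ω)
    (v : ℕ → EuclideanSpace ℝ (Fin 2) → ℝ) (hv : ∀ n, IsTest Ω (v n))
    (C : ℝ) (hC : ∀ n, Real.sqrt (∫ x in Ω, hess2 (v n) x) ≤ C) :
    ∃ k : ℕ → ℕ, StrictMono k ∧ ∀ ε : ℝ, 0 < ε → ∃ M : ℕ, ∀ m ≥ M, ∀ n ≥ M,
      dualNorm Ω (fun φ => Gam Ω (v (k m)) (v (k m)) φ - Gam Ω (v (k n)) (v (k n)) φ) < ε := by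
  have C0 : 0 ≤ C := (Real.sqrt_nonneg _).trans (hC 0)
  obtain ⟨R, hR, hRΩ⟩ : ∃ R : ℝ, 0 < R ∧ ∀ x ∈ Ω, ‖x‖ < R := by
    obtain ⟨R, hR⟩ := hbdd.exists_norm_le
    exact ⟨max R 0 + 1, by positivity, fun x hx => by
      have := hR x hx
      have := le_max_left R 0
      linarith⟩
  set B : ℝ := 2 * (Real.sqrt (2 * R * (2 * R)) * C)
  have hB : ∀ n x, |v n x| ≤ B := fun n x => sup_bd (hv n) hR hRΩ (hC n) x
  have B0 : 0 ≤ B := by positivity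
  let K : Set E2 := Metric.closedBall 0 R
  haveI : CompactSpace K := isCompact_iff_compactSpace.1 (isCompact_closedBall 0 R)
  let u : ℕ → BoundedContinuousFunction K ℝ := fun n =>
    BoundedContinuousFunction.mkOfCompact ⟨fun x => v n x, (hv n).cont.comp continuous_subtype_val⟩
  have hu : ∀ n (x : K), u n x = v n x := fun _ _ => rfl
  have hcomp : IsCompact (closure (Set.range u)) := by
    refine BoundedContinuousFunction.arzela_ascoli (Set.Icc (-B) B) isCompact_Icc _ ?_ ?_
    · rintro f x ⟨n, rfl⟩
      exact abs_le.1 (hB n x)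
    · refine Metric.equicontinuous_of_continuity_modulus
        (fun t => 2 * (Real.sqrt (2 * R * t) * C)) ?_ _ ?_
      · have : Continuous (fun t => 2 * (Real.sqrt (2 * R * t) * C)) := by fun_prop
        simpa using this.tendsto 0
      · rintro x y ⟨f, n, rfl⟩
        exact holder (hv n) hR hRΩ (hC n) x y
  obtain ⟨l, -, k, hk, hlim⟩ := hcomp.tendsto_subseq (fun n => subset_closure (Set.mem_range_self n))
  refine ⟨k, hk, fun ε hε => ?_⟩
  set D : ℝ := 24 * C * Real.sqrt (2 * B)
  have D0 : 0 ≤ D := by positivity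
  set A : ℝ := (ε / (2 * (D + 1))) ^ 2
  have A0 : 0 < A := by positivity
  obtain ⟨M, hM⟩ := Metric.cauchySeq_iff.1 hlim.cauchySeq A A0
  refine ⟨M, fun m hm n hn => ?_⟩
  have hz : ∀ x, |v (k m) x - v (k n) x| ≤ A := by
    intro x
    by_cases hx : x ∈ Ω
    · have hxK : x ∈ K := by simpa [K] using (hRΩ x hx).le
      have := (BoundedContinuousFunction.dist_coe_le_dist (f := u (k m)) (g := u (k n)) ⟨x, hxK⟩).trans (hM m hm n hn).le
      exact this
    · rw [(hv _).zero_out hx, (hv _).zero_out hx]; simpa using A0.le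
  have hs : ∀ x, |v (k m) x + v (k n) x| ≤ 2 * B := fun x =>
    (abs_add_le _ _).trans (by linarith [hB (k m) x, hB (k n) x])
  have : dualNorm Ω (fun φ => Gam Ω (v (k m)) (v (k m)) φ - Gam Ω (v (k n)) (v (k n)) φ) ≤ ε / 2 := by
    unfold dualNorm
    refine Real.sSup_le ?_ (by positivity)
    rintro r ⟨φ, hφ, h1, rfl⟩
    refine (gam_diff (hv _) (hv _) hφ A0.le (by positivity) (hC _) (hC _) h1 hz hs).trans ?_
    have e : Real.sqrt A = ε / (2 * (D + 1)) := Real.sqrt_sq (by positivity)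
    have : 24 * C * (Real.sqrt A * Real.sqrt (2 * B)) = D * (ε / (2 * (D + 1))) := by
      rw [e]; simp only [D]; ring
    rw [this]
    have : D * (ε / (2 * (D + 1))) = (D / (D + 1)) * (ε / 2) := by field_simp
    rw [this]
    have : D / (D + 1) ≤ 1 := by rw [div_le_one (by positivity)]; linarith
    nlinarith
  linarith

end
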